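/- Let L₁, L₂ be n×n positive definite Hermitian matrices with L₂ − L₁ positive semidefinite, and set Φ_j(x) = (1/2) L_j x·x̄ for j = 1, 2. Then sup{‖f‖_{H_{Φ₂}}/‖f‖_{H_{Φ₁}} : f entire on ℂⁿ, 0 < ‖f‖_{H_{Φ₁}} < ∞} = (det L₁ / det L₂)^{1/2}. -/

import Mathlib

open MeasureTheory Real Matrix
open scoped ENNReal ComplexOrder

noncomputable section

/-- Bilinear dot product on ℂⁿ. -/
def dotC {n : ℕ} (x y : Fin n → ℂ) : ℂ := ∑ j, x j * y j

/-- The real-quadratic weight Φ(x) = (1/2)(L x·x̄ + Re(P x·x)). -/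
def weight {n : ℕ} (L P : Matrix (Fin n) (Fin n) ℂ) (x : Fin n → ℂ) : ℝ :=
  (1 / 2) * ((dotC (L.mulVec x) (star x)).re + (dotC (P.mulVec x) x).re)

/-- Squared H_Φ norm, valued in [0,∞]. -/
def HPhiNormSq {n : ℕ} (Φ : (Fin n → ℂ) → ℝ) (f : (Fin n → ℂ) → ℂ) : ℝ≥0∞ :=
  ∫⁻ x, ENNReal.ofReal (‖f x‖ ^ 2 * Real.exp (-4 * π * Φ x))

/-- H_Φ norm, valued in [0,∞]. -/
def HPhiNorm {n : ℕ} (Φ : (Fin n → ℂ) → ℝ) (f : (Fin n → ℂ) → ℂ) : ℝ≥0∞ :=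
  HPhiNormSq Φ f ^ (1 / 2 : ℝ)

/-- Entrywise complex conjugate of a matrix. -/
def conjM {m : Type*} (M : Matrix m m ℂ) : Matrix m m ℂ := M.map (starRingEnd ℂ)

/-- The matrix 𝐀_Φ associated with the weight with Levi matrix L and pluriharmonic part P. -/
def Amat {n : ℕ} (L P : Matrix (Fin n) (Fin n) ℂ) :
    Matrix (Fin n ⊕ Fin n) (Fin n ⊕ Fin n) ℂ :=
  Matrix.fromBlocks (-(conjM L⁻¹ * P)) (Complex.I • conjM L⁻¹)
    (Complex.I • (L - conjM (P * L⁻¹) * P)) (-(conjM (P * L⁻¹)))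

/-- Norm of the embedding H_{Φ₁} → H_{Φ₂}. -/
def embedNorm {n : ℕ} (Φ₁ Φ₂ : (Fin n → ℂ) → ℝ) : ℝ≥0∞ :=
  ⨆ f : {f : (Fin n → ℂ) → ℂ //
      Differentiable ℂ f ∧ 0 < HPhiNorm Φ₁ f ∧ HPhiNorm Φ₁ f ≠ ⊤},
    HPhiNorm Φ₂ f.1 / HPhiNorm Φ₁ f.1

/-- The complex symplectic form on ℂ^{2n}. -/
def symp {n : ℕ} (X Y : Fin n ⊕ Fin n → ℂ) : ℂ :=
  ∑ j, X (Sum.inr j) * Y (Sum.inl j) - ∑ j, Y (Sum.inr j) * X (Sum.inl j)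

/-- The phase-space shift S_Y. -/
def shiftOp {n : ℕ} (Y : (Fin n → ℂ) × (Fin n → ℂ)) (f : (Fin n → ℂ) → ℂ)
    (x : Fin n → ℂ) : ℂ :=
  Complex.exp (2 * (π : ℂ) * Complex.I * (-(1 / 2) * dotC Y.1 Y.2 + dotC Y.2 x)) * f (x - Y.1)


/-!
Diagonalizing `L₁` and `L₂` simultaneously by a congruence, we may take `L₁ = 1` and
`L₂ = diagonal e` with `1 ≤ e i`. Rescaling `x i` by `c i = 1 / √(e i)` turns the embedding into
`f ↦ f (c * ·)` on the Gaussian space, up to the factor `∏ i, (e i)⁻¹ = det L₁ / det L₂` in the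
squared norm. Since `|c i| ≤ 1`, this contraction of the argument does not increase the norm: the
Poisson formula writes `f (c * x) ^ 2` as an average of `f (u * x) ^ 2` over `|u i| = 1`, and the
Gaussian weight is invariant under these rotations. Constants attain the bound.
-/

section HarmonicMeasure

variable {c w : ℂ} {R : ℝ}

/-- Harmonic measure of the circle of centre `c` and radius `R` seen from a point `w` inside it,
as a measure on the angles: the density is the Poisson kernel. -/
def circleHarmonicMeasure (c : ℂ) (R : ℝ) (w : ℂ) : Measure ℝ :=
  (volume.restrict (Set.Ioc 0 (2 * π))).withDensity fun θ ↦
    ENNReal.ofReal ((2 * π)⁻¹ * poissonKernel c w (circleMap c R θ))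

lemma poissonKernel_circleMap_nonneg (hw : w ∈ Metric.ball c R) (θ : ℝ) :
    0 ≤ poissonKernel c w (circleMap c R θ) := by
  have hwR : ‖w - c‖ ≤ |R| := (mem_ball_iff_norm.1 hw).le.trans (le_abs_self R)
  rw [poissonKernel_def, circleMap_sub_center, norm_circleMap_zero]
  exact div_nonneg (sub_nonneg.2 (by gcongr)) (by positivity)

lemma continuous_poissonKernel_circleMap (hw : w ∈ Metric.ball c R) :
    Continuous fun θ ↦ poissonKernel c w (circleMap c R θ) := by
  rw [poissonKernel_eq_re_herglotzRieszKernel]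
  exact Complex.continuous_re.comp <|
    (continuousOn_herglotzRieszKernel_sphere hw).comp_continuous (continuous_circleMap c R)
      (circleMap_mem_sphere' c R)

lemma integral_circleHarmonicMeasure {E : Type*} [NormedAddCommGroup E] [NormedSpace ℂ E]
    [CompleteSpace E] {f : ℂ → E} (hf : DiffContOnCl ℂ f (Metric.ball c R))
    (hw : w ∈ Metric.ball c R) :
    ∫ θ, f (circleMap c R θ) ∂circleHarmonicMeasure c R w = f w := by
  have hmeas := (continuous_poissonKernel_circleMap hw).measurable
  rw [circleHarmonicMeasure,
    integral_withDensity_eq_integral_toReal_smul (hmeas.const_mul _).ennreal_ofReal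
    (.of_forall fun θ ↦ ENNReal.ofReal_lt_top), ← hf.circleAverage_poissonKernel_smul hw,
    circleAverage_def, intervalIntegral.integral_of_le two_pi_pos.le, ← integral_smul]
  refine integral_congr_ae (.of_forall fun θ ↦ ?_)
  have hnonneg := poissonKernel_circleMap_nonneg hw θ
  simp only [Pi.smul_apply', smul_smul]
  rw [ENNReal.toReal_ofReal (by positivity)]

lemma isProbabilityMeasure_circleHarmonicMeasure (hw : w ∈ Metric.ball c R) :
    IsProbabilityMeasure (circleHarmonicMeasure c R w) := by
  have hmass : (circleHarmonicMeasure c R w).real Set.univ = 1 := by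
    simpa using integral_circleHarmonicMeasure (diffContOnCl_const (c := (1 : ℂ))) hw
  exact ⟨(ENNReal.toReal_eq_one_iff _).1 hmass⟩

end HarmonicMeasure

section TorusInvariant

variable {ι E : Type*} {μ : Measure (ι → ℂ)}

/-- Invariance of a measure on `ℂ^ι` under the coordinatewise rotations `x ↦ (u i * x i)` with
`‖u i‖ = 1`. -/
def IsTorusInvariant (μ : Measure (ι → ℂ)) : Prop :=
  ∀ u : ι → ℂ, (∀ i, ‖u i‖ = 1) → MeasurePreserving (u * ·) μ μ

lemma IsTorusInvariant.withDensity (hμ : IsTorusInvariant μ) {w : (ι → ℂ) → ℝ≥0∞}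
    (hw : Measurable w) (hrot : ∀ u : ι → ℂ, (∀ i, ‖u i‖ = 1) → ∀ x, w (u * x) = w x) :
    IsTorusInvariant (μ.withDensity w) := by
  refine fun u hu ↦ ⟨(hμ u hu).measurable, Measure.ext fun s hs ↦ ?_⟩
  have hpre := (hμ u hu).measurable hs
  rw [Measure.map_apply (hμ u hu).measurable hs, withDensity_apply _ hpre, withDensity_apply _ hs,
    ← (hμ u hu).setLIntegral_comp_preimage hs hw]
  simp only [hrot u hu]

lemma differentiable_mulSingle [DecidableEq ι] (j : ι) :
    Differentiable ℂ fun z : ℂ ↦ (Pi.mulSingle j z : ι → ℂ) :=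
  fun z ↦ (hasFDerivAt_update (1 : ι → ℂ) z).differentiableAt

lemma norm_mulSingle_eq_one [DecidableEq ι] {z : ℂ} (hz : ‖z‖ = 1) (j i : ι) :
    ‖(Pi.mulSingle j z : ι → ℂ) i‖ = 1 := by
  rcases eq_or_ne i j with rfl | hij
  · simpa using hz
  · simp [Pi.mulSingle_eq_of_ne hij]

lemma isTorusInvariant_volume [Fintype ι] :
    IsTorusInvariant (volume : Measure (ι → ℂ)) := fun u hu ↦
  volume_preserving_pi fun i ↦
    (rotation ⟨u i, mem_sphere_zero_iff_norm.2 (hu i)⟩).measurePreserving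

variable [Finite ι] [NormedAddCommGroup E] [NormedSpace ℂ E] [CompleteSpace E] [SFinite μ]
  {f : (ι → ℂ) → E}

lemma IsTorusInvariant.lintegral_enorm_mulSingle_mul_le [DecidableEq ι] (hμ : IsTorusInvariant μ)
    (hf : Differentiable ℂ f) (j : ι) {z : ℂ} (hz : ‖z‖ ≤ 1) :
    ∫⁻ x, ‖f (Pi.mulSingle j z * x)‖ₑ ∂μ ≤ ∫⁻ x, ‖f x‖ₑ ∂μ := by
  have := Fintype.ofFinite ι
  have hrot {u : ℂ} (hu : ‖u‖ = 1) :
      ∫⁻ x, ‖f (Pi.mulSingle j u * x)‖ₑ ∂μ = ∫⁻ x, ‖f x‖ₑ ∂μ :=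
    (hμ _ (norm_mulSingle_eq_one hu j)).lintegral_comp hf.continuous.enorm.measurable
  rcases hz.eq_or_lt with hz | hz
  · exact (hrot hz).le
  have hball : z ∈ Metric.ball (0 : ℂ) 1 := mem_ball_zero_iff.2 hz
  have hdiff := differentiable_mulSingle (ι := ι) j
  have := isProbabilityMeasure_circleHarmonicMeasure hball
  calc ∫⁻ x, ‖f (Pi.mulSingle j z * x)‖ₑ ∂μ
      ≤ ∫⁻ x, ∫⁻ θ, ‖f (Pi.mulSingle j (circleMap 0 1 θ) * x)‖ₑ
          ∂circleHarmonicMeasure 0 1 z ∂μ := by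
        refine lintegral_mono fun x ↦ ?_
        have hslice : Differentiable ℂ fun ζ ↦ f (Pi.mulSingle j ζ * x) :=
          hf.comp (hdiff.mul_const x)
        rw [← integral_circleHarmonicMeasure hslice.diffContOnCl hball]
        exact enorm_integral_le_lintegral_enorm _
    _ = ∫⁻ θ, ∫⁻ x, ‖f (Pi.mulSingle j (circleMap 0 1 θ) * x)‖ₑ ∂μ
          ∂circleHarmonicMeasure 0 1 z := by
        have := hf.continuous
        have := hdiff.continuous
        exact lintegral_lintegral_swap (Continuous.measurable (by fun_prop)).aemeasurable
    _ = ∫⁻ x, ‖f x‖ₑ ∂μ := by simp [hrot]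

lemma IsTorusInvariant.lintegral_enorm_mul_le (hμ : IsTorusInvariant μ)
    (hf : Differentiable ℂ f) {c : ι → ℂ} (hc : ∀ i, ‖c i‖ ≤ 1) :
    ∫⁻ x, ‖f (c * x)‖ₑ ∂μ ≤ ∫⁻ x, ‖f x‖ₑ ∂μ := by
  classical
  have := Fintype.ofFinite ι
  rw [← Finset.univ_prod_mulSingle c]
  induction (Finset.univ : Finset ι) using Finset.induction_on generalizing f with
  | empty => simp
  | insert j s hj ih =>
    have hscale : Differentiable ℂ fun x : ι → ℂ ↦ f (Pi.mulSingle j (c j) * x) := by fun_prop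
    simp_rw [Finset.prod_insert hj, mul_assoc]
    exact (ih hscale).trans (hμ.lintegral_enorm_mulSingle_mul_le hf j (hc j))

end TorusInvariant

section Congruence

variable {𝕜 ι : Type*} [RCLike 𝕜] [Fintype ι] [DecidableEq ι] {A L : Matrix ι ι 𝕜}

lemma exists_isUnit_eq_conjTranspose_mul_self (hL : L.PosDef) :
    ∃ M : Matrix ι ι 𝕜, IsUnit M ∧ L = Mᴴ * M := by
  open scoped MatrixOrder Matrix.Norms.L2Operator in
  exact CStarAlgebra.isStrictlyPositive_iff_eq_star_mul_self.1 hL.isStrictlyPositive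

lemma exists_conjTranspose_mul_mul_eq_one_and_eq_diagonal (hL : L.PosDef) (hA : A.IsHermitian) :
    ∃ (B : Matrix ι ι 𝕜) (e : ι → ℝ), Bᴴ * L * B = 1 ∧
      Bᴴ * A * B = diagonal fun i ↦ (e i : 𝕜) := by
  obtain ⟨M, hM, rfl⟩ := exists_isUnit_eq_conjTranspose_mul_self hL
  have hMinv : M * M⁻¹ = 1 := mul_nonsing_inv M ((isUnit_iff_isUnit_det M).1 hM)
  have hN : (M⁻¹ᴴ * A * M⁻¹).IsHermitian := isHermitian_conjTranspose_mul_mul _ hA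
  set U : Matrix ι ι 𝕜 := ↑hN.eigenvectorUnitary
  have hU : Uᴴ * U = 1 := Unitary.coe_star_mul_self _
  refine ⟨M⁻¹ * U, hN.eigenvalues, ?_, ?_⟩
  · calc (M⁻¹ * U)ᴴ * (Mᴴ * M) * (M⁻¹ * U) = Uᴴ * ((M * M⁻¹)ᴴ * (M * M⁻¹)) * U := by
          simp only [conjTranspose_mul, Matrix.mul_assoc]
      _ = 1 := by simp [hMinv, hU]
  · calc (M⁻¹ * U)ᴴ * A * (M⁻¹ * U) = Uᴴ * (M⁻¹ᴴ * A * M⁻¹) * U := by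
          simp only [conjTranspose_mul, Matrix.mul_assoc]
      _ = diagonal fun i ↦ (hN.eigenvalues i : 𝕜) := by
          have h := hN.conjStarAlgAut_star_eigenvectorUnitary
          rwa [Unitary.conjStarAlgAut_star_apply] at h

lemma re_det_conjTranspose_mul_mul (L B : Matrix ι ι 𝕜) :
    RCLike.re (Bᴴ * L * B).det = ‖B.det‖ ^ 2 * RCLike.re L.det := by
  rw [det_mul, det_mul, det_conjTranspose, mul_right_comm, RCLike.star_def, RCLike.conj_mul,
    ← RCLike.ofReal_pow, RCLike.re_ofReal_mul]

lemma re_det_pos_of_posDef (hL : L.PosDef) : 0 < RCLike.re L.det :=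
  (RCLike.pos_iff.1 hL.det_pos).1

end Congruence

lemma lintegral_exp_neg_mul_sum_norm_sq {ι : Type*} [Fintype ι] {b : ℝ} (hb : 0 < b) :
    ∫⁻ x : ι → ℂ, ENNReal.ofReal (Real.exp (-b * ∑ i, ‖x i‖ ^ 2)) =
      ENNReal.ofReal ((π / b) ^ Fintype.card ι) := by
  have hint : ∫ x : ι → ℂ, Real.exp (-b * ∑ i, ‖x i‖ ^ 2) = (π / b) ^ Fintype.card ι := by
    simp_rw [Finset.mul_sum, Real.exp_sum]
    rw [integral_fintype_prod_volume_eq_pow fun z : ℂ ↦ Real.exp (-b * ‖z‖ ^ 2),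
      GaussianFourier.integral_rexp_neg_mul_sq_norm hb, Complex.finrank_real_complex]
    simp
  have hne : ∫ x : ι → ℂ, Real.exp (-b * ∑ i, ‖x i‖ ^ 2) ≠ 0 := by
    rw [hint]
    positivity
  rw [← hint, ofReal_integral_eq_lintegral_ofReal (.of_integral_ne_zero hne)
    (.of_forall fun x ↦ (Real.exp_pos _).le)]

lemma lintegral_eq_ofReal_norm_det_sq_mul_lintegral_mulVec {ι : Type*} [Fintype ι]
    [DecidableEq ι] {B : Matrix ι ι ℂ} (hB : B.det ≠ 0) (g : (ι → ℂ) → ℝ≥0∞) :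
    ∫⁻ x, g x = ENNReal.ofReal (‖B.det‖ ^ 2) * ∫⁻ x, g (B *ᵥ x) := by
  set T : (ι → ℂ) →ₗ[ℝ] (ι → ℂ) := (toLin' B).restrictScalars ℝ
  have hdet : LinearMap.det T = ‖B.det‖ ^ 2 := by
    rw [LinearMap.det_restrictScalars, LinearMap.det_toLin', Algebra.norm_complex_apply,
      Complex.normSq_eq_norm_sq]
  have hpos : 0 < ‖B.det‖ ^ 2 := by positivity
  have hT : LinearMap.det T ≠ 0 := hdet.trans_ne hpos.ne'
  have hemb : MeasurableEmbedding T :=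
    (T.equivOfDetNeZero hT).toContinuousLinearEquiv.toHomeomorph.measurableEmbedding
  calc ∫⁻ x, g x
      = ENNReal.ofReal (‖B.det‖ ^ 2) * (ENNReal.ofReal (‖B.det‖ ^ 2)⁻¹ * ∫⁻ x, g x) := by
        rw [← mul_assoc, ← ENNReal.ofReal_mul hpos.le, mul_inv_cancel₀ hpos.ne',
          ENNReal.ofReal_one, one_mul]
    _ = ENNReal.ofReal (‖B.det‖ ^ 2) * ∫⁻ x, g x ∂Measure.map T volume := by
        rw [Measure.map_linearMap_addHaar_eq_smul_addHaar volume hT, hdet, lintegral_smul_measure,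
          abs_of_pos (inv_pos.2 hpos), smul_eq_mul]
    _ = ENNReal.ofReal (‖B.det‖ ^ 2) * ∫⁻ x, g (B *ᵥ x) := by
        rw [hemb.lintegral_map]
        rfl

section HPhi

variable {n : ℕ} {f : (Fin n → ℂ) → ℂ} {L L₁ L₂ : Matrix (Fin n) (Fin n) ℂ}

lemma weight_zero_eq_re_dotProduct (L : Matrix (Fin n) (Fin n) ℂ) (x : Fin n → ℂ) :
    weight L 0 x = (1 / 2) * (star x ⬝ᵥ L *ᵥ x).re := by
  simp [weight, dotC, dotProduct, mul_comm]

lemma weight_zero_mulVec (L B : Matrix (Fin n) (Fin n) ℂ) (x : Fin n → ℂ) :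
    weight L 0 (B *ᵥ x) = weight (Bᴴ * L * B) 0 x := by
  simp only [weight_zero_eq_re_dotProduct, star_mulVec, ← mulVec_mulVec, dotProduct_mulVec,
    vecMul_vecMul]

lemma weight_one_zero (x : Fin n → ℂ) : weight 1 0 x = (1 / 2) * ∑ i, ‖x i‖ ^ 2 := by
  simp [weight_zero_eq_re_dotProduct, dotProduct, ← Complex.normSq_eq_norm_sq,
    Complex.normSq_apply]

lemma continuous_weight (L P : Matrix (Fin n) (Fin n) ℂ) : Continuous (weight L P) := by
  unfold weight dotC
  fun_prop

lemma HPhiNormSq_eq_mul_comp_mulVec (L : Matrix (Fin n) (Fin n) ℂ) (f : (Fin n → ℂ) → ℂ)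
    {B : Matrix (Fin n) (Fin n) ℂ} (hB : B.det ≠ 0) :
    HPhiNormSq (weight L 0) f = ENNReal.ofReal (‖B.det‖ ^ 2) *
      HPhiNormSq (weight (Bᴴ * L * B) 0) fun x ↦ f (B *ᵥ x) := by
  simp only [HPhiNormSq, ← weight_zero_mulVec]
  exact lintegral_eq_ofReal_norm_det_sq_mul_lintegral_mulVec hB _

lemma HPhiNormSq_comp_mul_le {Φ : (Fin n → ℂ) → ℝ} (hΦ : Measurable Φ)
    (hrot : ∀ u : Fin n → ℂ, (∀ i, ‖u i‖ = 1) → ∀ x, Φ (u * x) = Φ x)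
    (hf : Differentiable ℂ f) {c : Fin n → ℂ} (hc : ∀ i, ‖c i‖ ≤ 1) :
    HPhiNormSq Φ (fun x ↦ f (c * x)) ≤ HPhiNormSq Φ f := by
  set w : (Fin n → ℂ) → ℝ≥0∞ := fun x ↦ ENNReal.ofReal (Real.exp (-4 * π * Φ x)) with hw
  have hwm : Measurable w := by fun_prop
  have hinv : IsTorusInvariant (volume.withDensity w) :=
    isTorusInvariant_volume.withDensity hwm fun u hu x ↦ by simp only [hw, hrot u hu]
  have hnorm {g : (Fin n → ℂ) → ℂ} (hg : Measurable g) :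
      HPhiNormSq Φ g = ∫⁻ x, ‖g x ^ 2‖ₑ ∂volume.withDensity w := by
    rw [lintegral_withDensity_eq_lintegral_mul _ hwm (by fun_prop)]
    refine lintegral_congr fun x ↦ ?_
    rw [Pi.mul_apply, mul_comm (w x), ENNReal.ofReal_mul (by positivity), ← norm_pow, ofReal_norm]
  have hfc := hf.continuous
  rw [hnorm hfc.measurable, hnorm (Continuous.measurable (by fun_prop))]
  exact hinv.lintegral_enorm_mul_le (hf.pow 2) hc

lemma HPhiNormSq_weight_diagonal_le {e : Fin n → ℝ} (he : ∀ i, 1 ≤ e i)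
    (hf : Differentiable ℂ f) :
    HPhiNormSq (weight (diagonal fun i ↦ (e i : ℂ)) 0) f ≤
      ENNReal.ofReal (∏ i, e i)⁻¹ * HPhiNormSq (weight 1 0) f := by
  set c : Fin n → ℂ := fun i ↦ ((√(e i))⁻¹ : ℝ) with hc
  have hcong : (diagonal c)ᴴ * (diagonal fun i ↦ (e i : ℂ)) * diagonal c = 1 := by
    rw [diagonal_conjTranspose, diagonal_mul_diagonal, diagonal_mul_diagonal, ← diagonal_one]
    congr 1 with i
    have hsq : (√(e i))⁻¹ * e i * (√(e i))⁻¹ = 1 := by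
      have := Real.sqrt_pos.2 (zero_lt_one.trans_le (he i))
      have := Real.sq_sqrt (zero_le_one.trans (he i))
      grind
    simpa [hc] using congrArg Complex.ofReal hsq
  have hdet : ‖(diagonal c).det‖ ^ 2 * ∏ i, e i = 1 := by
    have h := re_det_conjTranspose_mul_mul (diagonal fun i ↦ (e i : ℂ)) (diagonal c)
    rw [hcong, det_one, det_diagonal (d := fun i ↦ (e i : ℂ)), ← Complex.ofReal_prod] at h
    exact h.symm
  have hdet_ne : (diagonal c).det ≠ 0 := fun h ↦ by norm_num [h, -det_diagonal] at hdet
  have hc_le (i : Fin n) : ‖c i‖ ≤ 1 := by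
    rw [hc, Complex.norm_of_nonneg (by positivity)]
    exact inv_le_one_of_one_le₀ (Real.one_le_sqrt.2 (he i))
  have hmulVec (x : Fin n → ℂ) : diagonal c *ᵥ x = c * x := funext (mulVec_diagonal c x)
  rw [HPhiNormSq_eq_mul_comp_mulVec _ f hdet_ne, hcong,
    eq_inv_of_mul_eq_one_left hdet]
  simp only [hmulVec]
  gcongr
  exact HPhiNormSq_comp_mul_le (continuous_weight 1 0).measurable
    (fun u hu x ↦ by simp [weight_one_zero, hu]) hf hc_le

lemma HPhiNormSq_weight_le (hL₁ : L₁.PosDef) (hle : (L₂ - L₁).PosSemidef)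
    (hf : Differentiable ℂ f) :
    HPhiNormSq (weight L₂ 0) f ≤
      ENNReal.ofReal (L₁.det.re / L₂.det.re) * HPhiNormSq (weight L₁ 0) f := by
  have hL₂ : L₂.IsHermitian := sub_add_cancel L₂ L₁ ▸ hle.isHermitian.add hL₁.isHermitian
  obtain ⟨B, e, hB₁, hB₂⟩ := exists_conjTranspose_mul_mul_eq_one_and_eq_diagonal hL₁ hL₂
  have he (i : Fin n) : 1 ≤ e i := by
    have hdiag := (hle.conjTranspose_mul_mul_same B).diag_nonneg (i := i)
    rw [Matrix.mul_sub, Matrix.sub_mul, hB₁, hB₂] at hdiag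
    simpa [← Complex.ofReal_one, ← Complex.ofReal_sub] using hdiag
  have hdet₁ : ‖B.det‖ ^ 2 * L₁.det.re = 1 := by
    simpa [hB₁] using (re_det_conjTranspose_mul_mul L₁ B).symm
  have hdet₂ : ‖B.det‖ ^ 2 * L₂.det.re = ∏ i, e i := by
    simpa [hB₂, ← Complex.ofReal_prod] using (re_det_conjTranspose_mul_mul L₂ B).symm
  have hB : B.det ≠ 0 := fun h ↦ by simp [h] at hdet₁
  have hratio : (∏ i, e i)⁻¹ = L₁.det.re / L₂.det.re := by
    rw [← hdet₂, ← mul_div_mul_left _ _ (by positivity : ‖B.det‖ ^ 2 ≠ 0), hdet₁, one_div]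
  calc HPhiNormSq (weight L₂ 0) f
      = ENNReal.ofReal (‖B.det‖ ^ 2) *
          HPhiNormSq (weight (diagonal fun i ↦ (e i : ℂ)) 0) (fun x ↦ f (B *ᵥ x)) := by
        rw [HPhiNormSq_eq_mul_comp_mulVec L₂ f hB, hB₂]; rfl
    _ ≤ ENNReal.ofReal (‖B.det‖ ^ 2) * (ENNReal.ofReal (∏ i, e i)⁻¹ *
          HPhiNormSq (weight 1 0) fun x ↦ f (B *ᵥ x)) := by
        gcongr
        exact HPhiNormSq_weight_diagonal_le he
          (hf.comp (toLin' B).toContinuousLinearMap.differentiable)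
    _ = ENNReal.ofReal (L₁.det.re / L₂.det.re) * HPhiNormSq (weight L₁ 0) f := by
        rw [HPhiNormSq_eq_mul_comp_mulVec L₁ f hB, hB₁, hratio, mul_left_comm]

lemma HPhiNorm_weight_le (hL₁ : L₁.PosDef) (hle : (L₂ - L₁).PosSemidef)
    (hf : Differentiable ℂ f) :
    HPhiNorm (weight L₂ 0) f ≤
      ENNReal.ofReal ((L₁.det.re / L₂.det.re) ^ (1 / 2 : ℝ)) * HPhiNorm (weight L₁ 0) f := by
  have hL₂ : L₂.PosDef := add_sub_cancel L₁ L₂ ▸ hL₁.add_posSemidef hle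
  have hratio : 0 ≤ L₁.det.re / L₂.det.re :=
    div_nonneg (re_det_pos_of_posDef hL₁).le (re_det_pos_of_posDef hL₂).le
  rw [HPhiNorm, HPhiNorm, ← ENNReal.ofReal_rpow_of_nonneg hratio (by positivity),
    ← ENNReal.mul_rpow_of_nonneg _ _ (by positivity)]
  gcongr
  exact HPhiNormSq_weight_le hL₁ hle hf

lemma HPhiNormSq_weight_one_const_one :
    HPhiNormSq (weight (1 : Matrix (Fin n) (Fin n) ℂ) 0) (fun _ ↦ 1) =
      ENNReal.ofReal (2 ^ n)⁻¹ := by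
  have hexp (x : Fin n → ℂ) : -4 * π * weight 1 0 x = -(2 * π) * ∑ i, ‖x i‖ ^ 2 := by
    rw [weight_one_zero]
    ring
  simp only [HPhiNormSq, norm_one, one_pow, one_mul, hexp]
  rw [lintegral_exp_neg_mul_sum_norm_sq two_pi_pos, div_mul_cancel_right₀ pi_ne_zero, inv_pow,
    Fintype.card_fin]

lemma HPhiNormSq_weight_const_one (hL : L.PosDef) :
    HPhiNormSq (weight L 0) (fun _ ↦ 1) = ENNReal.ofReal (2 ^ n * L.det.re)⁻¹ := by
  obtain ⟨M, hM, rfl⟩ := exists_isUnit_eq_conjTranspose_mul_self hL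
  have hMdet : M.det ≠ 0 := ((isUnit_iff_isUnit_det M).1 hM).ne_zero
  have hdet : (Mᴴ * M).det.re = ‖M.det‖ ^ 2 := by
    simpa using re_det_conjTranspose_mul_mul 1 M
  have hpos : 0 < ‖M.det‖ ^ 2 := by positivity
  have hcov := HPhiNormSq_eq_mul_comp_mulVec 1 (fun _ ↦ 1) hMdet
  rw [HPhiNormSq_weight_one_const_one, Matrix.mul_one] at hcov
  rw [hdet, mul_inv, ENNReal.ofReal_mul (by positivity), hcov, mul_right_comm,
    ← ENNReal.ofReal_mul hpos.le, mul_inv_cancel₀ hpos.ne', ENNReal.ofReal_one, one_mul]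

lemma HPhiNorm_weight_const_one (hL : L.PosDef) :
    HPhiNorm (weight L 0) (fun _ ↦ 1) = ENNReal.ofReal ((2 ^ n * L.det.re)⁻¹ ^ (1 / 2 : ℝ)) := by
  have hdet := re_det_pos_of_posDef hL
  rw [HPhiNorm, HPhiNormSq_weight_const_one hL,
    ENNReal.ofReal_rpow_of_nonneg (by positivity) (by positivity)]

end HPhi

/-- embedding norm between weights with no pluriharmonic part. -/
theorem embedding_norm_no_pluriharmonic (n : ℕ) (L₁ L₂ : Matrix (Fin n) (Fin n) ℂ)
    (hL₁ : L₁.PosDef) (hL₂ : L₂.PosDef) (hle : (L₂ - L₁).PosSemidef) :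
    embedNorm (weight L₁ 0) (weight L₂ 0) =
      ENNReal.ofReal ((L₁.det.re / L₂.det.re) ^ ((1 : ℝ) / 2)) := by
  have hdet₁ : 0 < L₁.det.re := re_det_pos_of_posDef hL₁
  have hdet₂ : 0 < L₂.det.re := re_det_pos_of_posDef hL₂
  have hone₁ := HPhiNorm_weight_const_one hL₁
  have hone₂ := HPhiNorm_weight_const_one hL₂
  refine le_antisymm (iSup_le fun ⟨f, hf, _, _⟩ ↦ ENNReal.div_le_of_le_mul ?_) ?_
  · exact HPhiNorm_weight_le hL₁ hle hf
  · refine le_iSup_of_le ⟨fun _ ↦ 1, differentiable_const _, ?_, ?_⟩ (le_of_eq ?_)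
    · rw [hone₁, ENNReal.ofReal_pos]
      positivity
    · rw [hone₁]
      exact ENNReal.ofReal_ne_top
    · change _ = HPhiNorm (weight L₂ 0) (fun _ ↦ 1) / HPhiNorm (weight L₁ 0) (fun _ ↦ 1)
      rw [hone₁, hone₂, ← ENNReal.ofReal_div_of_pos (by positivity),
        ← Real.div_rpow (by positivity) (by positivity), inv_div_inv,
        mul_div_mul_left _ _ (by positivity)]

end
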